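/- arXiv:2307.06035 — 2 statements merged into one kernel-verified Lean document; each statement's English description precedes it below -/
import Mathlib

section
/- Define u on the upper half-plane by u(x + iy) = 1 − arg(x + iy)·(x/y) for y > 0 (so that in polar coordinates u = 1 − θ·cot θ with θ = arg z ∈ (0,π)). Then for every x ∈ ℝ and y > 0, y²·(∂²u/∂x² + ∂²u/∂y²)(x + iy) = 2·u(x + iy); that is, u is an eigenfunction of the hyperbolic Laplacian y²(∂²/∂x² + ∂²/∂y²) with eigenvalue 2. -/
/-- The function `u(x + iy) = 1 - arg(x + iy)·(x/y)`; in polar coordinates this is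
`u = 1 - θ·cot θ` with `θ = arg z ∈ (0, π)`. -/
noncomputable def u (x y : ℝ) : ℝ :=
  1 - Complex.arg ((x : ℂ) + (y : ℂ) * Complex.I) * (x / y)

/-!
Write `u = 1 - θ * q` with `θ = arg z` and `q = x / y`. Being the imaginary part of `log z`, the
angle `θ` is harmonic. Moreover `y² Δq = 2 * q` and `y² ⟪∇θ, ∇q⟫ = -1`, so the product rule for the
Laplacian gives `y² Δ(θ * q) = 2 * (θ * q) - 2`, which is `y² Δu = 2 * u`.
-/

open Complex Topology

theorem iteratedDeriv_two_mul {𝕜 𝔸 : Type*} [NontriviallyNormedField 𝕜] [NormedRing 𝔸]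
    [NormedAlgebra 𝕜 𝔸] {f g : 𝕜 → 𝔸} {x : 𝕜}
    (hf : ContDiffAt 𝕜 2 f x) (hg : ContDiffAt 𝕜 2 g x) :
    iteratedDeriv 2 (fun s => f s * g s) x =
      iteratedDeriv 2 f x * g x + 2 * (deriv f x * deriv g x) + f x * iteratedDeriv 2 g x := by
  have leibniz := iteratedDeriv_mul (n := 2) hf hg
  simp only [Pi.mul_def, Nat.reduceAdd, Finset.sum_range_succ, Finset.range_one,
    Finset.sum_singleton, Nat.choose_zero_right, Nat.cast_one, iteratedDeriv_zero, one_mul,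
    tsub_zero, Nat.choose_succ_self_right, Nat.cast_ofNat, iteratedDeriv_one, Nat.add_one_sub_one,
    Nat.choose_self, tsub_self] at leibniz
  rw [leibniz]
  noncomm_ring

section PlaneLaplacian

variable {E : Type*} [NormedAddCommGroup E] [NormedSpace ℝ E]

/-- The Euclidean Laplacian `∂²f/∂x² + ∂²f/∂y²` of a function of two real variables, in curried
form. A second partial derivative is the second iterated derivative of a one-variable slice, with
the usual junk value where the slice is not twice differentiable. -/
noncomputable def planeLaplacian (f : ℝ → ℝ → E) (x y : ℝ) : E :=
  iteratedDeriv 2 (fun s => f s y) x + iteratedDeriv 2 (fun t => f x t) y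

theorem planeLaplacian_const_sub (c : E) (f : ℝ → ℝ → E) (x y : ℝ) :
    planeLaplacian (fun s t => c - f s t) x y = -planeLaplacian f x y := by
  simp only [planeLaplacian, iteratedDeriv_const_sub two_pos, iteratedDeriv_neg, neg_add]

variable {𝔸 : Type*} [NormedRing 𝔸] [NormedAlgebra ℝ 𝔸]

theorem planeLaplacian_mul {f g : ℝ → ℝ → 𝔸} {x y : ℝ}
    (hf : ContDiffAt ℝ 2 (Function.uncurry f) (x, y))
    (hg : ContDiffAt ℝ 2 (Function.uncurry g) (x, y)) :
    planeLaplacian (fun s t => f s t * g s t) x y =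
      planeLaplacian f x y * g x y
        + 2 * (deriv (fun s => f s y) x * deriv (fun s => g s y) x
          + deriv (fun t => f x t) y * deriv (fun t => g x t) y)
        + f x y * planeLaplacian g x y := by
  have horizontal : ContDiffAt ℝ 2 (fun s : ℝ => (s, y)) x := by fun_prop
  have vertical : ContDiffAt ℝ 2 (fun t : ℝ => (x, t)) y := by fun_prop
  have hxx := iteratedDeriv_two_mul (hf.comp x horizontal) (hg.comp x horizontal)
  have hyy := iteratedDeriv_two_mul (hf.comp y vertical) (hg.comp y vertical)
  simp only [Function.comp_def, Function.uncurry_apply_pair] at hxx hyy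
  rw [planeLaplacian, hxx, hyy, planeLaplacian, planeLaplacian]
  noncomm_ring

end PlaneLaplacian

section Arg

theorem hasDerivAt_arg_comp {γ : ℝ → ℂ} {γ' : ℂ} {t : ℝ} (hγ : HasDerivAt γ γ' t)
    (ht : γ t ∈ slitPlane) : HasDerivAt (fun t => arg (γ t)) (γ' / γ t).im t := by
  simpa only [Function.comp_def, imCLM_apply, log_im] using
    imCLM.hasFDerivAt.comp_hasDerivAt t (hγ.clog_real ht)

theorem contDiffAt_arg {z : ℂ} (hz : z ∈ slitPlane) {n : WithTop ℕ∞} :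
    ContDiffAt ℝ n arg z := by
  simpa only [Function.comp_def, imCLM_apply, log_im] using
    imCLM.contDiff.contDiffAt.comp z ((contDiffAt_log hz).restrict_scalars ℝ)

theorem hasDerivAt_add_ofReal_mul (a b : ℂ) (t : ℝ) :
    HasDerivAt (fun t : ℝ => a + t * b) b t := by
  simpa using ((hasDerivAt_id t).ofReal_comp.mul_const b).const_add a

theorem deriv_arg_line {a b : ℂ} {t : ℝ} (h : a + t * b ∈ slitPlane) :
    deriv (fun t : ℝ => arg (a + t * b)) t = (b / (a + t * b)).im :=
  (hasDerivAt_arg_comp (hasDerivAt_add_ofReal_mul a b t) h).deriv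

theorem iteratedDeriv_two_arg_line {a b : ℂ} {t : ℝ} (h : a + t * b ∈ slitPlane) :
    iteratedDeriv 2 (fun t : ℝ => arg (a + t * b)) t = -((b / (a + t * b)) ^ 2).im := by
  have line := hasDerivAt_add_ofReal_mul a b t
  have deriv_eq : deriv (fun t : ℝ => arg (a + t * b)) =ᶠ[𝓝 t] fun t => (b / (a + t * b)).im := by
    filter_upwards [line.continuousAt.eventually (isOpen_slitPlane.mem_nhds h)] with s hs
      using deriv_arg_line hs
  have quotient : HasDerivAt (fun t : ℝ => b / (a + t * b)) (-(b / (a + t * b)) ^ 2) t :=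
    ((hasDerivAt_const t b).div line (slitPlane_ne_zero h)).congr_deriv (by
      rw [zero_mul, zero_sub, neg_div, ← pow_two, div_pow])
  rw [iteratedDeriv_succ, iteratedDeriv_one, deriv_eq.deriv_eq]
  simpa only [Function.comp_def, imCLM_apply, neg_im] using
    (imCLM.hasFDerivAt.comp_hasDerivAt t quotient).deriv

end Arg

section PolarAngle

/-- The principal polar angle `θ ∈ (-π, π]` of the point `(x, y)`, as a function of Cartesian
coordinates. -/
noncomputable def polarAngle (x y : ℝ) : ℝ := arg (x + y * I)

variable {x y : ℝ}

theorem contDiffAt_polarAngle (h : (x + y * I : ℂ) ∈ slitPlane) {n : WithTop ℕ∞} :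
    ContDiffAt ℝ n (Function.uncurry polarAngle) (x, y) := by
  have coordinates : ContDiffAt ℝ n (fun p : ℝ × ℝ => (p.1 + p.2 * I : ℂ)) (x, y) := by
    have hofReal : ContDiff ℝ n ((↑) : ℝ → ℂ) := ofRealCLM.contDiff
    fun_prop
  exact (contDiffAt_arg h).comp (x, y) coordinates

theorem polarAngle_left_eq_arg_line (y : ℝ) :
    (fun s => polarAngle s y) = fun s : ℝ => arg (y * I + s * 1) := by
  simp only [polarAngle, mul_one, add_comm]

theorem deriv_polarAngle_left (h : (x + y * I : ℂ) ∈ slitPlane) :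
    deriv (fun s => polarAngle s y) x = -y / (x ^ 2 + y ^ 2) := by
  rw [polarAngle_left_eq_arg_line, deriv_arg_line (by simpa [add_comm] using h)]
  simp [normSq_apply, pow_two]

theorem deriv_polarAngle_right (h : (x + y * I : ℂ) ∈ slitPlane) :
    deriv (fun t => polarAngle x t) y = x / (x ^ 2 + y ^ 2) := by
  refine (deriv_arg_line h).trans ?_
  simp [div_im, normSq_apply, pow_two]

theorem planeLaplacian_polarAngle (h : (x + y * I : ℂ) ∈ slitPlane) :
    planeLaplacian polarAngle x y = 0 := by
  have hxx : iteratedDeriv 2 (fun s => polarAngle s y) x = -((1 / (x + y * I : ℂ)) ^ 2).im := by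
    rw [polarAngle_left_eq_arg_line, iteratedDeriv_two_arg_line (by simpa [add_comm] using h),
      mul_one, add_comm]
  have hyy : iteratedDeriv 2 (fun t => polarAngle x t) y = -((I / (x + y * I)) ^ 2).im :=
    iteratedDeriv_two_arg_line h
  rw [planeLaplacian, hxx, hyy, div_pow, div_pow, I_sq, one_pow, neg_div, neg_im, neg_neg,
    neg_add_cancel]

end PolarAngle

theorem contDiffAt_uncurry_div (x : ℝ) {y : ℝ} (hy : y ≠ 0) {n : WithTop ℕ∞} :
    ContDiffAt ℝ n (Function.uncurry fun s t : ℝ => s / t) (x, y) :=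
  contDiffAt_fst.div contDiffAt_snd hy

theorem planeLaplacian_div (x y : ℝ) :
    planeLaplacian (fun s t => s / t) x y = 2 * x / y ^ 3 := by
  have hxx : iteratedDeriv 2 (fun s => s / y) x = 0 := by
    simp [iteratedDeriv_succ]
  have hyy : iteratedDeriv 2 (fun t => x / t) y = 2 * x / y ^ 3 := by
    have hzpow : y ^ (-1 - (2 : ℕ) : ℤ) = (y ^ 3)⁻¹ := zpow_neg_coe_of_pos y three_pos
    simp only [div_eq_mul_inv, iteratedDeriv_const_mul_field, iteratedDeriv_eq_iterate]
    rw [iter_deriv_inv, hzpow, Nat.factorial_two]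
    push_cast
    ring
  rw [planeLaplacian, hxx, hyy, zero_add]

theorem add_mul_I_mem_slitPlane (x : ℝ) {y : ℝ} (hy : y ≠ 0) : (x + y * I : ℂ) ∈ slitPlane := by
  simp [mem_slitPlane_iff, hy]

theorem grad_polarAngle_inner_grad_div (x : ℝ) {y : ℝ} (hy : y ≠ 0) :
    deriv (fun s => polarAngle s y) x * deriv (fun s => s / y) x
      + deriv (fun t => polarAngle x t) y * deriv (fun t => x / t) y = -1 / y ^ 2 := by
  have hz := add_mul_I_mem_slitPlane x hy
  have hr : x ^ 2 + y ^ 2 ≠ 0 := by positivity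
  rw [deriv_polarAngle_left hz, deriv_polarAngle_right hz, deriv_const_div_id,
    deriv_div_const, deriv_id'']
  field_simp
  ring

theorem u_eq : u = fun s t => 1 - polarAngle s t * (s / t) := rfl

theorem laplacian_u_general (x y : ℝ) (hy : y ≠ 0) :
    y ^ 2 * (iteratedDeriv 2 (fun s : ℝ => u s y) x
        + iteratedDeriv 2 (fun t : ℝ => u x t) y)
      = 2 * u x y := by
  have hz := add_mul_I_mem_slitPlane x hy
  calc y ^ 2 * planeLaplacian u x y
      = -(y ^ 2 * planeLaplacian (fun s t => polarAngle s t * (s / t)) x y) := by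
        rw [u_eq, planeLaplacian_const_sub, mul_neg]
    _ = -(y ^ 2 * (2 * (-1 / y ^ 2) + polarAngle x y * (2 * x / y ^ 3))) := by
        rw [planeLaplacian_mul (contDiffAt_polarAngle hz) (contDiffAt_uncurry_div x hy),
          planeLaplacian_polarAngle hz, grad_polarAngle_inner_grad_div x hy, planeLaplacian_div,
          zero_mul, zero_add]
    _ = 2 * (1 - polarAngle x y * (x / y)) := by
        field_simp
        ring
    _ = 2 * u x y := rfl

/-- `u` is an eigenfunction of the hyperbolic Laplacian `y²(∂²/∂x² + ∂²/∂y²)` with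
eigenvalue `2`: for all `x ∈ ℝ` and `y > 0`,
`y²·(∂²u/∂x² + ∂²u/∂y²)(x + iy) = 2·u(x + iy)`. -/
theorem laplacian_u (x y : ℝ) (hy : 0 < y) :
    y ^ 2 * (iteratedDeriv 2 (fun s : ℝ => u s y) x
        + iteratedDeriv 2 (fun t : ℝ => u x t) y)
      = 2 * u x y :=
  laplacian_u_general x y hy.ne'
end

section
/- There exist constants c₁ > 0 and c₂ > 0 such that for every θ ∈ (0, π): c₁·sin²θ ≤ min(1 − θ·cot θ, 1 + (π − θ)·cot θ) ≤ c₂·sin²θ. (Here 1 + (π−θ)·cot θ = u(π−θ) where u(θ) = 1 − θ·cot θ.) -/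
/-!
For `u θ = 1 - θ * cot θ`, both `sin θ ^ 2 / 3 ≤ u θ` on `(0, π)` and `u θ ≤ sin θ ^ 2` on
`(0, π / 2]` come from the inequality `sin x * cos x ≤ x` for `x ≥ 0`. After multiplication by
`sin θ`, the lower bound reads `sin θ ^ 3 / 3 ≤ sin θ - θ * cos θ`; the two sides agree at `0`, and
their difference has derivative `sin θ * (θ - sin θ * cos θ)`. The upper bound reads
`sin θ - θ * cos θ ≤ sin θ ^ 3`, where the difference is exactly `cos θ * (θ - sin θ * cos θ)`.
The reflection `θ ↦ π - θ` exchanges the two terms of the minimum and moves `[π / 2, π)` into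
`(0, π / 2]`.
-/

open Real Set

/-- The function `u(θ) = 1 - θ cot θ` of the polar angle `θ` in the upper half-plane, an
eigenfunction of the hyperbolic Laplacian: `sin² θ · u'' = 2 u` on `(0, π)`. -/
noncomputable def angularEigenfunction (θ : ℝ) : ℝ := 1 - θ * cot θ

variable {x θ : ℝ}

lemma sin_mul_cos_le_self (hx : 0 ≤ x) : sin x * cos x ≤ x := by
  have h_double : sin (2 * x) ≤ 2 * x := sin_le (by positivity)
  rw [sin_two_mul] at h_double
  linarith

lemma hasDerivAt_sin_sub_mul_cos_sub_sin_cube (x : ℝ) :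
    HasDerivAt (fun y => sin y - y * cos y - sin y ^ 3 / 3) (sin x * (x - sin x * cos x)) x := by
  have h := ((hasDerivAt_sin x).sub ((hasDerivAt_id' x).mul (hasDerivAt_cos x))).sub
    (((hasDerivAt_sin x).pow 3).div_const 3)
  exact h.congr_deriv (by ring)

lemma monotoneOn_sin_sub_mul_cos_sub_sin_cube :
    MonotoneOn (fun y => sin y - y * cos y - sin y ^ 3 / 3) (Icc 0 π) := by
  refine monotoneOn_of_hasDerivWithinAt_nonneg (convex_Icc 0 π)
    (fun x _ => (hasDerivAt_sin_sub_mul_cos_sub_sin_cube x).continuousAt.continuousWithinAt)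
    (fun x _ => (hasDerivAt_sin_sub_mul_cos_sub_sin_cube x).hasDerivWithinAt) fun x hx => ?_
  obtain ⟨hx₀, hxπ⟩ := interior_subset hx
  exact mul_nonneg (sin_nonneg_of_nonneg_of_le_pi hx₀ hxπ) (sub_nonneg.2 (sin_mul_cos_le_self hx₀))

lemma sin_cube_div_three_le_sin_sub_mul_cos (hx₀ : 0 ≤ x) (hxπ : x ≤ π) :
    sin x ^ 3 / 3 ≤ sin x - x * cos x := by
  simpa using monotoneOn_sin_sub_mul_cos_sub_sin_cube ⟨le_rfl, pi_nonneg⟩ ⟨hx₀, hxπ⟩ hx₀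

lemma sin_sub_mul_cos_le_sin_cube (hx₀ : 0 ≤ x) (hx : x ≤ π / 2) :
    sin x - x * cos x ≤ sin x ^ 3 := by
  have h_diff : sin x ^ 3 - (sin x - x * cos x) = cos x * (x - sin x * cos x) := by
    linear_combination sin x * sin_sq_add_cos_sq x
  have h_cos : 0 ≤ cos x := cos_nonneg_of_mem_Icc ⟨by linarith, hx⟩
  rw [← sub_nonneg, h_diff]
  exact mul_nonneg h_cos (sub_nonneg.2 (sin_mul_cos_le_self hx₀))

lemma angularEigenfunction_eq_div (h : sin θ ≠ 0) :
    angularEigenfunction θ = (sin θ - θ * cos θ) / sin θ := by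
  rw [angularEigenfunction, cot_eq_cos_div_sin]
  field_simp

lemma angularEigenfunction_pi_sub (θ : ℝ) :
    angularEigenfunction (π - θ) = 1 + (π - θ) * cot θ := by
  rw [angularEigenfunction, cot_eq_cos_div_sin, cot_eq_cos_div_sin, cos_pi_sub, sin_pi_sub]
  ring

lemma sin_sq_div_three_le_angularEigenfunction (hθ₀ : 0 < θ) (hθπ : θ < π) :
    sin θ ^ 2 / 3 ≤ angularEigenfunction θ := by
  have h_sin : 0 < sin θ := sin_pos_of_pos_of_lt_pi hθ₀ hθπ
  rw [angularEigenfunction_eq_div h_sin.ne', le_div_iff₀ h_sin]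
  calc sin θ ^ 2 / 3 * sin θ = sin θ ^ 3 / 3 := by ring
    _ ≤ sin θ - θ * cos θ := sin_cube_div_three_le_sin_sub_mul_cos hθ₀.le hθπ.le

lemma angularEigenfunction_le_sin_sq (hθ₀ : 0 < θ) (hθ : θ ≤ π / 2) :
    angularEigenfunction θ ≤ sin θ ^ 2 := by
  have h_sin : 0 < sin θ := sin_pos_of_pos_of_lt_pi hθ₀ (by linarith)
  rw [angularEigenfunction_eq_div h_sin.ne', div_le_iff₀ h_sin, ← pow_succ]
  exact sin_sub_mul_cos_le_sin_cube hθ₀.le hθ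

lemma sin_sq_div_three_le_min_angularEigenfunction (hθ₀ : 0 < θ) (hθπ : θ < π) :
    sin θ ^ 2 / 3 ≤ min (angularEigenfunction θ) (angularEigenfunction (π - θ)) := by
  refine le_min (sin_sq_div_three_le_angularEigenfunction hθ₀ hθπ) ?_
  rw [← sin_pi_sub θ]
  exact sin_sq_div_three_le_angularEigenfunction (by linarith) (by linarith)

lemma min_angularEigenfunction_le_sin_sq (hθ₀ : 0 < θ) (hθπ : θ < π) :
    min (angularEigenfunction θ) (angularEigenfunction (π - θ)) ≤ sin θ ^ 2 := by
  rcases le_total θ (π / 2) with hθ | hθ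
  · exact min_le_of_left_le (angularEigenfunction_le_sin_sq hθ₀ hθ)
  · rw [← sin_pi_sub θ]
    exact min_le_of_right_le (angularEigenfunction_le_sin_sq (by linarith) (by linarith))

/-- There are universal constants `c₁, c₂ > 0` with
`c₁·sin²θ ≤ min (1 - θ·cot θ) (1 + (π - θ)·cot θ) ≤ c₂·sin²θ` for all `θ ∈ (0, π)`. -/
theorem min_u_comparable_sin_sq :
    ∃ c₁ > (0 : ℝ), ∃ c₂ > (0 : ℝ), ∀ θ : ℝ, 0 < θ → θ < Real.pi →
      c₁ * Real.sin θ ^ 2 ≤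
          min (1 - θ * (Real.cos θ / Real.sin θ))
            (1 + (Real.pi - θ) * (Real.cos θ / Real.sin θ)) ∧
        min (1 - θ * (Real.cos θ / Real.sin θ))
            (1 + (Real.pi - θ) * (Real.cos θ / Real.sin θ)) ≤ c₂ * Real.sin θ ^ 2 := by
  refine ⟨1 / 3, by norm_num, 1, one_pos, fun θ hθ₀ hθπ => ?_⟩
  rw [← cot_eq_cos_div_sin, ← angularEigenfunction_pi_sub, ← angularEigenfunction,
    one_div_mul_eq_div, one_mul]
  exact ⟨sin_sq_div_three_le_min_angularEigenfunction hθ₀ hθπ,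
    min_angularEigenfunction_le_sin_sq hθ₀ hθπ⟩
end
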